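/- arXiv:2206.08032 — 2 statements merged into one kernel-verified Lean document; each statement's English description precedes it below -/
import Mathlib

section
/- Let M be a compact metric space and let p, q ∈ M with p ≠ q, and set δ = dist(p, q). Let f = (dist_p + dist_q)/2 ∈ C_b(M, ℝ). Then ‖f − dist_p‖_∞ = ‖f − dist_q‖_∞ = δ/2, and for every r ∈ M one has ‖f − dist_r‖_∞ ≥ δ/2. Consequently the distance from f to the image Φ(M) equals δ/2, and it is attained at the two distinct points Φ(p) and Φ(q). -/
open Metric BoundedContinuousFunction

/-- The Kuratowski embedding of a compact metric space `M` into `C_b(M, ℝ)`. -/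
noncomputable def distFun (M : Type*) [MetricSpace M] [CompactSpace M] (p : M) :
    BoundedContinuousFunction M ℝ :=
  .mkOfCompact ⟨fun z => dist p z, by fun_prop⟩

/-!
The function `f` is the midpoint of `Φ p` and `Φ q`, and `Φ` is an isometry, so `f` lies at
distance `δ / 2` from both. Since `dist_r` vanishes at `r`, evaluating `f - dist_r` at `r` gives
`‖f - dist_r‖ ≥ f r = (dist p r + dist q r) / 2 ≥ δ / 2`.
-/

theorem infDist_eq_dist_of_forall_le {X : Type*} [PseudoMetricSpace X] {s : Set X} {x y : X}
    (hy : y ∈ s) (hmin : ∀ z ∈ s, dist x y ≤ dist x z) : infDist x s = dist x y :=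
  le_antisymm (infDist_le_dist_of_mem hy) ((le_infDist ⟨y, hy⟩).2 hmin)

section Kuratowski

variable {M : Type*} [MetricSpace M] [CompactSpace M]

@[simp]
theorem distFun_apply (p z : M) : distFun M p z = dist p z := rfl

theorem isometry_distFun : Isometry (distFun M) := by
  refine Isometry.of_dist_eq fun p q => le_antisymm ?_ ?_
  · exact (dist_le dist_nonneg).2 fun z => dist_dist_dist_le_left p q z
  · calc
      dist p q = dist (distFun M p q) (distFun M q q) := by simp
      _ ≤ dist (distFun M p) (distFun M q) := dist_coe_le_dist q

theorem apply_le_dist_distFun (g : BoundedContinuousFunction M ℝ) (r : M) :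
    g r ≤ dist g (distFun M r) :=
  calc
    g r ≤ |g r| := le_abs_self _
    _ = dist (g r) (distFun M r r) := by simp
    _ ≤ dist g (distFun M r) := dist_coe_le_dist r

theorem midpoint_distFun_apply (p q z : M) :
    midpoint ℝ (distFun M p) (distFun M q) z = (dist p z + dist q z) / 2 := by
  simp only [midpoint_eq_smul_add, invOf_eq_inv, BoundedContinuousFunction.smul_apply,
    BoundedContinuousFunction.add_apply, distFun_apply, smul_eq_mul]
  ring

theorem dist_midpoint_distFun_left (p q : M) :
    dist (midpoint ℝ (distFun M p) (distFun M q)) (distFun M p) = dist p q / 2 := by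
  rw [dist_midpoint_left, isometry_distFun.dist_eq, Real.norm_two, inv_mul_eq_div]

theorem dist_midpoint_distFun_right (p q : M) :
    dist (midpoint ℝ (distFun M p) (distFun M q)) (distFun M q) = dist p q / 2 := by
  rw [midpoint_comm, dist_midpoint_distFun_left, dist_comm]

theorem half_dist_le_dist_midpoint_distFun (p q r : M) :
    dist p q / 2 ≤ dist (midpoint ℝ (distFun M p) (distFun M q)) (distFun M r) :=
  calc
    dist p q / 2 ≤ (dist p r + dist q r) / 2 := by gcongr; exact dist_triangle_right p q r
    _ = midpoint ℝ (distFun M p) (distFun M q) r := (midpoint_distFun_apply p q r).symm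
    _ ≤ dist (midpoint ℝ (distFun M p) (distFun M q)) (distFun M r) := apply_le_dist_distFun _ r

theorem infDist_midpoint_distFun (p q : M) :
    infDist (midpoint ℝ (distFun M p) (distFun M q)) (Set.range (distFun M)) = dist p q / 2 := by
  rw [← dist_midpoint_distFun_left p q]
  refine infDist_eq_dist_of_forall_le (Set.mem_range_self p) (Set.forall_mem_range.2 fun r => ?_)
  rw [dist_midpoint_distFun_left]
  exact half_dist_le_dist_midpoint_distFun p q r

end Kuratowski

/-- For `p ≠ q`, `δ = dist p q` and `f = (dist_p + dist_q)/2`, we have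
`‖f − dist_p‖ = ‖f − dist_q‖ = δ/2`, every `r ∈ M` satisfies `‖f − dist_r‖ ≥ δ/2`,
so `dist(f, Φ(M)) = δ/2`, attained at the two distinct points `Φ(p) ≠ Φ(q)`. -/
theorem midpoint_two_nearest_points {M : Type*} [MetricSpace M] [CompactSpace M]
    (p q : M) (hpq : p ≠ q) (δ : ℝ) (hδ : δ = dist p q)
    (f : BoundedContinuousFunction M ℝ)
    (hf : f = (1 / 2 : ℝ) • (distFun M p + distFun M q)) :
    ‖f - distFun M p‖ = δ / 2 ∧ ‖f - distFun M q‖ = δ / 2 ∧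
      (∀ r : M, δ / 2 ≤ ‖f - distFun M r‖) ∧
      Metric.infDist f (Set.range (distFun M)) = δ / 2 ∧
      distFun M p ≠ distFun M q := by
  have hmid : f = midpoint ℝ (distFun M p) (distFun M q) := by
    rw [hf, midpoint_eq_smul_add, invOf_eq_inv, one_div]
  simp only [← dist_eq_norm, hmid, hδ]
  exact ⟨dist_midpoint_distFun_left p q, dist_midpoint_distFun_right p q,
    half_dist_le_dist_midpoint_distFun p q, infDist_midpoint_distFun p q,
    isometry_distFun.injective.ne hpq⟩
end

section
/- Let M be a compact connected metric space with more than one point. Then for every p ∈ M and every ε > 0 there exist f ∈ C_b(M, ℝ) and q ∈ M with q ≠ p such that ‖f − dist_p‖_∞ < ε and the distance from f to the image Φ(M) equals both ‖f − dist_p‖_∞ and ‖f − dist_q‖_∞. In other words, arbitrarily close to Φ(p) there are points of C_b(M, ℝ) with at least two distinct nearest points in Φ(M), so the reach of Φ(M) at every point p is zero. -/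
open Metric BoundedContinuousFunction

/-!
If `Φ` is a Kuratowski map, the midpoint `m` of `Φ p` and `Φ q` satisfies
`m x - Φ x x = (dist p x + dist q x) / 2 ≥ dist p q / 2` for every `x`, because `dist x x = 0`.
So no point of the image is closer to `m` than `Φ p` and `Φ q`, which lie at distance exactly
`dist p q / 2` since `Φ` is an isometry. When `p` is not isolated, `q` can be taken close to `p`.
-/

open scoped Topology

/-- Kuratowski maps: the maps `p ↦ dist p · - g` into the bounded continuous functions, for a
normalization `g : M → ℝ` which the definition eliminates by taking differences. The choice `g = 0`
requires `M` to be bounded; `g = dist p₀ ·` gives the Kuratowski embedding of any metric space. -/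
def IsKuratowskiMap {M : Type*} [PseudoMetricSpace M] (Φ : M → M →ᵇ ℝ) : Prop :=
  ∀ p q z, Φ p z - Φ q z = dist p z - dist q z

namespace IsKuratowskiMap

variable {M : Type*} [PseudoMetricSpace M] {Φ : M → M →ᵇ ℝ}

theorem isometry (hΦ : IsKuratowskiMap Φ) : Isometry Φ := by
  refine Isometry.of_dist_eq fun p q => le_antisymm ?_ ?_
  · refine (dist_le dist_nonneg).mpr fun z => ?_
    rw [Real.dist_eq, hΦ]
    exact abs_dist_sub_le p q z
  · calc
      dist p q = Φ p q - Φ q q := by rw [hΦ, dist_self, sub_zero]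
      _ ≤ dist (Φ p q) (Φ q q) := le_abs_self _
      _ ≤ dist (Φ p) (Φ q) := dist_coe_le_dist q

theorem midpoint_apply_sub_apply_self (hΦ : IsKuratowskiMap Φ) (p q x : M) :
    midpoint ℝ (Φ p) (Φ q) x - Φ x x = (dist p x + dist q x) / 2 := by
  have hp : Φ p x - Φ x x = dist p x := by rw [hΦ, dist_self, sub_zero]
  have hq : Φ q x - Φ x x = dist q x := by rw [hΦ, dist_self, sub_zero]
  have hm : midpoint ℝ (Φ p) (Φ q) x = (Φ p x + Φ q x) / 2 := by
    simp [midpoint_eq_smul_add, inv_mul_eq_div, add_div]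
  linarith

theorem half_dist_le_dist_midpoint (hΦ : IsKuratowskiMap Φ) (p q x : M) :
    dist p q / 2 ≤ dist (midpoint ℝ (Φ p) (Φ q)) (Φ x) :=
  calc
    dist p q / 2 ≤ (dist p x + dist q x) / 2 := by gcongr; exact dist_triangle_right p q x
    _ = midpoint ℝ (Φ p) (Φ q) x - Φ x x := (hΦ.midpoint_apply_sub_apply_self p q x).symm
    _ ≤ dist (midpoint ℝ (Φ p) (Φ q) x) (Φ x x) := le_abs_self _
    _ ≤ dist (midpoint ℝ (Φ p) (Φ q)) (Φ x) := dist_coe_le_dist x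

theorem dist_midpoint_left (hΦ : IsKuratowskiMap Φ) (p q : M) :
    dist (midpoint ℝ (Φ p) (Φ q)) (Φ p) = dist p q / 2 := by
  rw [_root_.dist_midpoint_left, hΦ.isometry.dist_eq, Real.norm_ofNat, inv_mul_eq_div]

theorem dist_midpoint_right (hΦ : IsKuratowskiMap Φ) (p q : M) :
    dist (midpoint ℝ (Φ p) (Φ q)) (Φ q) = dist p q / 2 := by
  rw [midpoint_comm, hΦ.dist_midpoint_left, dist_comm]

theorem infDist_midpoint_range (hΦ : IsKuratowskiMap Φ) (p q : M) :
    infDist (midpoint ℝ (Φ p) (Φ q)) (Set.range Φ) = dist p q / 2 := by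
  apply le_antisymm
  · exact (infDist_le_dist_of_mem (Set.mem_range_self p)).trans_eq (hΦ.dist_midpoint_left p q)
  · exact (le_infDist ⟨Φ p, Set.mem_range_self p⟩).mpr
      (Set.forall_mem_range.mpr (hΦ.half_dist_le_dist_midpoint p q))

end IsKuratowskiMap

theorem isKuratowskiMap_distFun (M : Type*) [MetricSpace M] [CompactSpace M] :
    IsKuratowskiMap (distFun M) :=
  fun _ _ _ => rfl

theorem reach_kuratowski_zero_general {M : Type*} [MetricSpace M] {Φ : M → M →ᵇ ℝ}
    (hΦ : IsKuratowskiMap Φ) (p : M) [(𝓝[≠] p).NeBot] (ε : ℝ) (hε : 0 < ε) :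
    ∃ (f : M →ᵇ ℝ) (q : M), q ≠ p ∧ ‖f - Φ p‖ < ε ∧
      infDist f (Set.range Φ) = ‖f - Φ p‖ ∧ infDist f (Set.range Φ) = ‖f - Φ q‖ := by
  obtain ⟨q, hqp, hqε⟩ : ∃ q, q ≠ p ∧ dist q p < ε :=
    ((eventually_mem_nhdsWithin (s := {p}ᶜ)).and
      (mem_nhdsWithin_of_mem_nhds (ball_mem_nhds p hε))).exists
  refine ⟨midpoint ℝ (Φ p) (Φ q), q, hqp, ?_⟩
  simp only [← dist_eq_norm, hΦ.infDist_midpoint_range, hΦ.dist_midpoint_left,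
    hΦ.dist_midpoint_right, and_self, and_true]
  rw [dist_comm]
  exact (half_lt_self (dist_pos.mpr hqp)).trans hqε

/-- For a compact connected metric space with more than one point, arbitrarily close to
`Φ(p)` there are functions `f` whose distance to `Φ(M)` is attained at (at least) two
distinct points `Φ(p)` and `Φ(q)`: the reach of the Kuratowski embedding at every
point is zero. -/
theorem reach_kuratowski_zero {M : Type*} [MetricSpace M] [CompactSpace M]
    [ConnectedSpace M] [Nontrivial M] (p : M) (ε : ℝ) (hε : 0 < ε) :
    ∃ (f : BoundedContinuousFunction M ℝ) (q : M), q ≠ p ∧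
      ‖f - distFun M p‖ < ε ∧
      Metric.infDist f (Set.range (distFun M)) = ‖f - distFun M p‖ ∧
      Metric.infDist f (Set.range (distFun M)) = ‖f - distFun M q‖ :=
  reach_kuratowski_zero_general (isKuratowskiMap_distFun M) p ε hε
end
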